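/- For any type V with a binary relation ∈ on V, if x is an upper and p is a predecessor of x, then x ∈ x and p ∈ p; i.e., the implication 'x ∈ x implies the predecessor of x is self-membered' holds for any upper. -/

import Mathlib

/-- `x` is an *upper* for the membership relation `mem` if it contains every element that is not a
member of itself; that is, `x` contains the Russell class but may contain more. -/
def IsUpper {V : Type*} (mem : V → V → Prop) (x : V) : Prop :=
  ∀ z, ¬ mem z z → mem z x

namespace IsUpper

variable {V : Type*} {mem : V → V → Prop} {x y : V}

theorem self_mem (hx : IsUpper mem x) : mem x x :=
  by_contra fun not_mem => not_mem (hx x not_mem)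

theorem of_forall_mem_of_ne (hx : IsUpper mem x) (hxy : ∀ z, mem z x → z ≠ x → mem z y) :
    IsUpper mem y := by
  intro z hz
  have z_ne_x : z ≠ x := by
    rintro rfl
    exact hz hx.self_mem
  exact hxy z (hx z hz) z_ne_x

end IsUpper

theorem upper_pred_self_mem {V : Type*} (mem : V → V → Prop) (x p : V)
    (hx : ∀ z, ¬ mem z z → mem z x)
    (hp : ∀ z, mem z p ↔ (mem z x ∧ z ≠ x)) :
    mem x x ∧ mem p p := by
  have x_upper : IsUpper mem x := hx
  have p_upper : IsUpper mem p :=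
    x_upper.of_forall_mem_of_ne fun z hzx hne => (hp z).mpr ⟨hzx, hne⟩
  exact ⟨x_upper.self_mem, p_upper.self_mem⟩
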